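/- Let A be the minimum DFA recognizing a language L ⊆ Σ* that is Wheeler with respect to an ordered alphabet (Σ,≺), and let n be the number of states of A. Then every equivalence class of the relation ≡^c_L on Pref(L) contains a word of length strictly less than n + n². -/

import Mathlib

/-!
Common framework: words over an ordered alphabet, co-lexicographic order,
(partial) DFAs and NFAs, Wheeler automata and Wheeler languages,
following "Ordering regular languages: a danger zone".
-/

namespace WheelerPaper

/-- Strict co-lexicographic order on words: compare the reverses lexicographically. -/
def Colex {A : Type} [LinearOrder A] (x y : List A) : Prop :=
  List.Lex (· < ·) x.reverse y.reverse

/-- Non-strict co-lexicographic order. -/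
def ColexLE {A : Type} [LinearOrder A] (x y : List A) : Prop :=
  Colex x y ∨ x = y

/-- Right context `α⁻¹L` of a word `α` with respect to a language `L`. -/
def rc {A : Type} (L : Set (List A)) (α : List A) : Set (List A) :=
  {γ | α ++ γ ∈ L}

/-- `Pref L`: the set of prefixes of words of `L`. -/
def Pref {A : Type} (L : Set (List A)) : Set (List A) :=
  {α | ∃ β, α ++ β ∈ L}

/-- `wpow γ i` is `γ^i`, the `i`-fold concatenation of the word `γ`. -/
def wpow {A : Type} (γ : List A) : ℕ → List A
  | 0 => []
  | n + 1 => γ ++ wpow γ n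

/-- A DFA with a possibly partial transition function. -/
structure PDFA (A : Type) (Q : Type) where
  init : Q
  trans : Q → A → Option Q
  accept : Q → Prop

/-- Extended (partial) transition function of a `PDFA`. -/
def PDFA.evalFrom {A Q : Type} (M : PDFA A Q) : Q → List A → Option Q
  | q, [] => some q
  | q, a :: w => (M.trans q a).bind fun q' => PDFA.evalFrom M q' w

/-- The language accepted by a `PDFA`. -/
def PDFA.accepts {A Q : Type} (M : PDFA A Q) : Set (List A) :=
  {w | ∃ q, M.evalFrom M.init w = some q ∧ M.accept q}

/-- A `PDFA` is trim if every state is reachable from the initial state and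
every state can reach some accepting state. -/
def PDFA.Trim {A Q : Type} (M : PDFA A Q) : Prop :=
  (∀ q : Q, ∃ α, M.evalFrom M.init α = some q) ∧
  (∀ q : Q, ∃ α q', M.evalFrom q α = some q' ∧ M.accept q')

/-- `r` is a Wheeler order for the DFA `M`: a strict total order on states whose
minimum is the initial state, the initial state has no incoming transitions, and
the two Wheeler conditions hold. -/
def IsWheelerOrder {A Q : Type} [LinearOrder A] (M : PDFA A Q) (r : Q → Q → Prop) : Prop :=
  IsStrictTotalOrder Q r ∧
  (∀ q : Q, q ≠ M.init → r M.init q) ∧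
  (∀ (q : Q) (a : A), M.trans q a ≠ some M.init) ∧
  (∀ (u₁ : Q) (a₁ : A) (v₁ : Q) (u₂ : Q) (a₂ : A) (v₂ : Q),
     M.trans u₁ a₁ = some v₁ → M.trans u₂ a₂ = some v₂ →
     (a₁ < a₂ → r v₁ v₂) ∧ (a₁ = a₂ → r u₁ u₂ → (r v₁ v₂ ∨ v₁ = v₂)))

/-- A language is Wheeler (w.r.t. the given order on the alphabet) if it is
recognized by some Wheeler DFA. -/
def IsWheelerLang {A : Type} [LinearOrder A] (L : Set (List A)) : Prop :=
  ∃ (n : ℕ) (M : PDFA A (Fin n)) (r : Fin n → Fin n → Prop),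
    IsWheelerOrder M r ∧ M.accepts = L

/-- A language is regular if it is recognized by some finite-state (partial) DFA. -/
def IsRegular {A : Type} (L : Set (List A)) : Prop :=
  ∃ (k : ℕ) (M : PDFA A (Fin k)), M.accepts = L

/-- The input-consistent convex refinement `≡^c_L` of the Myhill–Nerode
equivalence: same right context, same last character (or both empty), and every
word of `Pref L` co-lexicographically between the two words has the same right
context. -/
def EquivC {A : Type} [LinearOrder A] (L : Set (List A)) (α β : List A) : Prop :=
  rc L α = rc L β ∧ α.getLast? = β.getLast? ∧
  ∀ γ ∈ Pref L,
    ((ColexLE α γ ∧ ColexLE γ β) ∨ (ColexLE β γ ∧ ColexLE γ α)) →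
    rc L γ = rc L α

/-- An NFA with a single initial state. -/
structure NFA' (A : Type) (Q : Type) where
  init : Q
  trans : Q → A → Set Q
  accept : Q → Prop

/-- One step of an `NFA'` on a set of states. -/
def NFA'.stepSet {A Q : Type} (M : NFA' A Q) (S : Set Q) (a : A) : Set Q :=
  {q | ∃ p ∈ S, q ∈ M.trans p a}

/-- Extended transition function of an `NFA'` on sets of states. -/
def NFA'.evalFrom {A Q : Type} (M : NFA' A Q) : Set Q → List A → Set Q
  | S, [] => S
  | S, a :: w => NFA'.evalFrom M (M.stepSet S a) w

/-- The language accepted by an `NFA'`. -/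
def NFA'.accepts {A Q : Type} (M : NFA' A Q) : Set (List A) :=
  {w | ∃ q ∈ M.evalFrom {M.init} w, M.accept q}

/-- An `NFA'` is trim if every state is reachable from the initial state and
every state can reach some accepting state. -/
def NFA'.Trim {A Q : Type} (M : NFA' A Q) : Prop :=
  (∀ q : Q, ∃ α, q ∈ M.evalFrom {M.init} α) ∧
  (∀ q : Q, ∃ α, ∃ q' ∈ M.evalFrom {q} α, M.accept q')

/-- `r` is a Wheeler order for the NFA `M`. -/
def IsWheelerNFAOrder {A Q : Type} [LinearOrder A] (M : NFA' A Q) (r : Q → Q → Prop) : Prop :=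
  IsStrictTotalOrder Q r ∧
  (∀ q : Q, q ≠ M.init → r M.init q) ∧
  (∀ (q : Q) (a : A), M.init ∉ M.trans q a) ∧
  (∀ (u₁ : Q) (a₁ : A) (v₁ : Q) (u₂ : Q) (a₂ : A) (v₂ : Q),
     v₁ ∈ M.trans u₁ a₁ → v₂ ∈ M.trans u₂ a₂ →
     (a₁ < a₂ → r v₁ v₂) ∧ (a₁ = a₂ → r u₁ u₂ → (r v₁ v₂ ∨ v₁ = v₂)))

/-- `I` is an interval with respect to the strict order `r`. -/
def IsIntervalRel {Q : Type} (r : Q → Q → Prop) (I : Set Q) : Prop :=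
  ∀ x y z : Q, (r x y ∨ x = y) → (r y z ∨ y = z) → x ∈ I → z ∈ I → y ∈ I

/-- The class of star-free languages: built from `∅`, `{ε}` and the singletons
`{a}` by union, concatenation and complement. -/
inductive StarFree {A : Type} : Set (List A) → Prop
  | empty : StarFree ∅
  | eps : StarFree {[]}
  | single (a : A) : StarFree {[a]}
  | union {L₁ L₂ : Set (List A)} : StarFree L₁ → StarFree L₂ → StarFree (L₁ ∪ L₂)
  | concat {L₁ L₂ : Set (List A)} : StarFree L₁ → StarFree L₂ →
      StarFree {w | ∃ u v, u ∈ L₁ ∧ v ∈ L₂ ∧ w = u ++ v}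
  | compl {L : Set (List A)} : StarFree L → StarFree Lᶜ


/-- The language of all words over the sub-alphabet `S`. -/
def wordsOver {A : Type} (S : Set A) : Language A := {w | ∀ x ∈ w, x ∈ S}


section Statement3

/-!
The states of a Wheeler DFA weakly increase, in the co-lexicographic order, with the words that
reach them, so right contexts cannot alternate forever along a co-lexicographically monotone
sequence of prefixes of `L`. Suppose `s ≤ g ≤ t`, where `s` and `t` have the same right context and
`g` a different one, and appending `u` changes none of the three contexts. Replacing `u` by a power,
we may take it longer than `g`; then `g` lies on one side of all words ending in `u`, so either
`s uᵏ ≤ g uᵏ ≤ s uᵏ⁺¹` for all `k`, or `t uᵏ⁺¹ ≤ g uᵏ ≤ t uᵏ` for all `k`: a contradiction.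

Let `N` be the number of right contexts of prefixes of `L`. A prefix `α` of length at least
`N + N²` has, by pigeonhole, two prefixes `s`, `t` of length at most `N` with the same right
context, `s` the shorter; write `α = t w` with `|w| ≥ N²`. A word between `s w` and `t w` is of the
form `g w`, and pigeonhole on pairs of right contexts yields a factor of `w` that is a loop for `s`,
`t` and `g` simultaneously, whence `s w ≡ᶜ t w`.
-/

section Colex

variable {A : Type} [LinearOrder A] {x y z w : List A}

theorem colexLE_iff_reverse_le : ColexLE x y ↔ x.reverse ≤ y.reverse := by
  rw [le_iff_lt_or_eq, List.reverse_inj]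
  rfl

theorem ColexLE.trans (hxy : ColexLE x y) (hyz : ColexLE y z) : ColexLE x z := by
  rw [colexLE_iff_reverse_le] at hxy hyz ⊢
  exact hxy.trans hyz

theorem ColexLE.antisymm (hxy : ColexLE x y) (hyx : ColexLE y x) : x = y := by
  rw [colexLE_iff_reverse_le] at hxy hyx
  exact List.reverse_inj.1 (le_antisymm hxy hyx)

theorem colexLE_total (x y : List A) : ColexLE x y ∨ ColexLE y x := by
  simpa only [colexLE_iff_reverse_le] using le_total x.reverse y.reverse

theorem nil_colexLE (x : List A) : ColexLE [] x := by
  rw [colexLE_iff_reverse_le, ← not_lt]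
  exact List.not_lt_nil _

theorem not_concat_colexLE_nil (x : List A) (a : A) : ¬ColexLE (x ++ [a]) [] := fun h =>
  List.append_ne_nil_of_right_ne_nil x (List.cons_ne_nil a []) (h.antisymm (nil_colexLE _))

theorem concat_colexLE_concat_iff {a b : A} :
    ColexLE (x ++ [a]) (y ++ [b]) ↔ a < b ∨ a = b ∧ ColexLE x y := by
  simp only [colexLE_iff_reverse_le, List.reverse_concat, le_iff_lt_or_eq, List.cons_lt_cons_iff,
    List.cons.injEq]
  tauto

theorem append_colexLE_append_right_iff : ColexLE (x ++ w) (y ++ w) ↔ ColexLE x y := by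
  induction w using List.reverseRecOn with
  | nil => simp only [List.append_nil]
  | append_singleton w a ih =>
    simp only [← List.append_assoc, concat_colexLE_concat_iff, lt_irrefl, false_or, true_and, ih]

theorem isSuffix_of_colexLE_of_colexLE (hxz : ColexLE (x ++ w) z) (hzy : ColexLE z (y ++ w)) :
    w <:+ z := by
  induction w using List.reverseRecOn generalizing z with
  | nil => exact List.nil_suffix
  | append_singleton w a ih =>
    rw [← List.append_assoc] at hxz hzy
    obtain rfl | ⟨z, b, rfl⟩ := z.eq_nil_or_concat'
    · exact absurd hxz (not_concat_colexLE_nil _ _)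
    rw [concat_colexLE_concat_iff] at hxz hzy
    obtain rfl : a = b := le_antisymm (hxz.elim le_of_lt (·.1.le)) (hzy.elim le_of_lt (·.1.le))
    simp only [lt_irrefl, false_or, true_and] at hxz hzy
    obtain ⟨p, rfl⟩ := ih hxz hzy
    exact ⟨p, (List.append_assoc ..).symm⟩

theorem forall_colexLE_append_or_forall_append_colexLE (h : z.length < w.length) :
    (∀ x, ColexLE z (x ++ w)) ∨ ∀ x, ColexLE (x ++ w) z := by
  by_contra! hsides
  obtain ⟨⟨x, hx⟩, y, hy⟩ := hsides
  have hxz : ColexLE (x ++ w) z := (colexLE_total _ _).resolve_left hx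
  have hzy : ColexLE z (y ++ w) := (colexLE_total _ _).resolve_right hy
  exact h.not_ge (isSuffix_of_colexLE_of_colexLE hxz hzy).length_le

end Colex

section RightContext

variable {A : Type} {L : Set (List A)} {x y v : List A}

/-- The right contexts of the prefixes of `L`; they correspond to the states of the minimum trim DFA
of `L`. The empty set, the right context of every other word, is not among them. -/
def rightContexts (L : Set (List A)) : Set (Set (List A)) :=
  rc L '' Pref L

theorem mem_pref_iff_rc_nonempty : x ∈ Pref L ↔ (rc L x).Nonempty := Iff.rfl

theorem mem_pref_of_rc_eq (h : rc L x = rc L y) (hx : x ∈ Pref L) : y ∈ Pref L := by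
  rwa [mem_pref_iff_rc_nonempty, ← h]

theorem mem_pref_of_isPrefix (h : x <+: y) (hy : y ∈ Pref L) : x ∈ Pref L := by
  obtain ⟨w, rfl⟩ := h
  obtain ⟨z, hz⟩ := hy
  exact ⟨w ++ z, by rwa [← List.append_assoc]⟩

theorem rc_append (L : Set (List A)) (x w : List A) : rc L (x ++ w) = rc (rc L x) w := by
  simp only [rc, List.append_assoc, Set.mem_ofPred_eq]

theorem rc_append_congr (h : rc L x = rc L y) (w : List A) : rc L (x ++ w) = rc L (y ++ w) := by
  rw [rc_append, rc_append, h]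

theorem rc_append_wpow (h : rc L (x ++ v) = rc L x) (k : ℕ) : rc L (x ++ wpow v k) = rc L x := by
  induction k with
  | zero => rw [wpow, List.append_nil]
  | succ k ih => rw [wpow, ← List.append_assoc, rc_append_congr h, ih]

theorem length_wpow (v : List A) (k : ℕ) : (wpow v k).length = k * v.length := by
  induction k with
  | zero => rw [wpow, List.length_nil, zero_mul]
  | succ k ih => rw [wpow, List.length_append, ih, add_one_mul, add_comm]

end RightContext

namespace PDFA

variable {A Q : Type} (M : PDFA A Q)

/-- The language accepted by `M` when started in the state `q`. -/
def acceptsFrom (q : Q) : Set (List A) :=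
  {w | ∃ p, M.evalFrom q w = some p ∧ M.accept p}

variable {M}

theorem evalFrom_append (q : Q) (x y : List A) :
    M.evalFrom q (x ++ y) = (M.evalFrom q x).bind (M.evalFrom · y) := by
  induction x generalizing q with
  | nil => rfl
  | cons a x ih =>
    simp only [List.cons_append, evalFrom, Option.bind_assoc, ih]

theorem evalFrom_concat_eq_some_iff {q p : Q} {x : List A} {a : A} :
    M.evalFrom q (x ++ [a]) = some p ↔ ∃ q', M.evalFrom q x = some q' ∧ M.trans q' a = some p := by
  simp only [evalFrom_append, evalFrom, Option.bind_fun_some, Option.bind_eq_some_iff]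

theorem exists_evalFrom_eq_some {x : List A} (hx : x ∈ Pref M.accepts) :
    ∃ q, M.evalFrom M.init x = some q := by
  obtain ⟨w, p, hp, -⟩ := hx
  rw [evalFrom_append, Option.bind_eq_some_iff] at hp
  exact hp.imp fun _ => And.left

theorem rc_accepts_eq_acceptsFrom {x : List A} {q : Q} (hq : M.evalFrom M.init x = some q) :
    rc M.accepts x = M.acceptsFrom q := by
  simp only [rc, accepts, acceptsFrom, Set.mem_ofPred_eq, evalFrom_append, hq, Option.bind_some]

variable (M)

theorem rightContexts_accepts_subset_range :
    rightContexts M.accepts ⊆ Set.range M.acceptsFrom := by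
  rintro _ ⟨x, hx, rfl⟩
  obtain ⟨q, hq⟩ := exists_evalFrom_eq_some hx
  exact ⟨q, (rc_accepts_eq_acceptsFrom hq).symm⟩

theorem ncard_rightContexts_accepts_le [Finite Q] :
    (rightContexts M.accepts).ncard ≤ Nat.card Q :=
  calc (rightContexts M.accepts).ncard
    _ ≤ (Set.range M.acceptsFrom).ncard :=
      Set.ncard_le_ncard M.rightContexts_accepts_subset_range (Set.finite_range _)
    _ ≤ Nat.card Q := Finite.card_range_le M.acceptsFrom

end PDFA

section Wheeler

variable {A : Type} [LinearOrder A] {L : Set (List A)}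

theorem IsWheelerOrder.eq_or_rel_of_colexLE {Q : Type} {M : PDFA A Q} {r : Q → Q → Prop}
    (hr : IsWheelerOrder M r) {x y : List A} {p q : Q} (hp : M.evalFrom M.init x = some p)
    (hq : M.evalFrom M.init y = some q) (hxy : ColexLE x y) : p = q ∨ r p q := by
  obtain ⟨-, hinit, -, htrans⟩ := hr
  induction x using List.reverseRecOn generalizing y p q with
  | nil =>
    obtain rfl : M.init = p := Option.some.inj hp
    exact (eq_or_ne M.init q).imp_right fun hne => hinit q hne.symm
  | append_singleton x a ih =>
    obtain rfl | ⟨y, b, rfl⟩ := y.eq_nil_or_concat'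
    · exact absurd hxy (not_concat_colexLE_nil x a)
    obtain ⟨p', hp', hpa⟩ := PDFA.evalFrom_concat_eq_some_iff.1 hp
    obtain ⟨q', hq', hqb⟩ := PDFA.evalFrom_concat_eq_some_iff.1 hq
    have hpq := htrans _ _ _ _ _ _ hpa hqb
    obtain hab | ⟨rfl, hxy'⟩ := concat_colexLE_concat_iff.1 hxy
    · exact Or.inr (hpq.1 hab)
    obtain rfl | hpq' := ih hp' hq' hxy'
    · exact Or.inl (Option.some.inj (hpa.symm.trans hqb))
    · exact (hpq.2 rfl hpq').symm

theorem IsWheelerLang.finite_rightContexts (hW : IsWheelerLang L) : (rightContexts L).Finite := by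
  obtain ⟨-, M, -, -, rfl⟩ := hW
  exact (Set.finite_range _).subset M.rightContexts_accepts_subset_range

theorem IsWheelerLang.exists_monotone_labelling (hW : IsWheelerLang L) :
    ∃ (Q : Type) (_ : LinearOrder Q) (_ : Finite Q) (f : List A → Q), ∀ x ∈ Pref L, ∀ y ∈ Pref L,
      (ColexLE x y → f x ≤ f y) ∧ (f x = f y → rc L x = rc L y) := by
  classical
  obtain ⟨n, M, r, hr, rfl⟩ := hW
  have : IsStrictTotalOrder _ r := hr.1
  have : Nonempty (Fin n) := ⟨M.init⟩
  choose! f hf using fun x (hx : x ∈ Pref M.accepts) => PDFA.exists_evalFrom_eq_some hx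
  refine ⟨Fin n, linearOrderOfSTO r, inferInstance, f,
    fun x hx y hy => ⟨fun hxy => ?_, fun h => ?_⟩⟩
  · exact hr.eq_or_rel_of_colexLE (hf x hx) (hf y hy) hxy
  · rw [PDFA.rc_accepts_eq_acceptsFrom (hf x hx), PDFA.rc_accepts_eq_acceptsFrom (hf y hy), h]

theorem IsWheelerLang.not_ascending_interlaced (hW : IsWheelerLang L) {a b : ℕ → List A}
    (ha : ∀ k, a k ∈ Pref L) (hb : ∀ k, b k ∈ Pref L) (hne : ∀ k, rc L (a k) ≠ rc L (b k)) :
    ¬∀ k, ColexLE (a k) (b k) ∧ ColexLE (b k) (a (k + 1)) := by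
  intro h
  obtain ⟨Q, _, _, f, hf⟩ := hW.exists_monotone_labelling
  have hmono : StrictMono (f ∘ a) := strictMono_nat_of_lt_succ fun k =>
    calc f (a k)
      _ < f (b k) := ((hf _ (ha k) _ (hb k)).1 (h k).1).lt_of_ne
        (mt (hf _ (ha k) _ (hb k)).2 (hne k))
      _ ≤ f (a (k + 1)) := (hf _ (hb k) _ (ha (k + 1))).1 (h k).2
  exact not_injective_infinite_finite _ hmono.injective

theorem IsWheelerLang.not_descending_interlaced (hW : IsWheelerLang L) {a b : ℕ → List A}
    (ha : ∀ k, a k ∈ Pref L) (hb : ∀ k, b k ∈ Pref L) (hne : ∀ k, rc L (a k) ≠ rc L (b k)) :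
    ¬∀ k, ColexLE (a (k + 1)) (b k) ∧ ColexLE (b k) (a k) := by
  intro h
  obtain ⟨Q, _, _, f, hf⟩ := hW.exists_monotone_labelling
  have hanti : StrictAnti (f ∘ a) := strictAnti_nat_of_succ_lt fun k =>
    calc f (a (k + 1))
      _ ≤ f (b k) := (hf _ (ha (k + 1)) _ (hb k)).1 (h k).1
      _ < f (a k) := ((hf _ (hb k) _ (ha k)).1 (h k).2).lt_of_ne
        (mt (hf _ (hb k) _ (ha k)).2 (hne k).symm)
  exact not_injective_infinite_finite _ hanti.injective

theorem IsWheelerLang.rc_eq_of_long_loop (hW : IsWheelerLang L) {s g t u : List A}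
    (hs : s ∈ Pref L) (hg : g ∈ Pref L) (hst : rc L s = rc L t)
    (hsg : ColexLE s g) (hgt : ColexLE g t)
    (hsu : rc L (s ++ u) = rc L s) (hgu : rc L (g ++ u) = rc L g) (hlen : g.length < u.length) :
    rc L g = rc L s := by
  by_contra hne
  have htu : rc L (t ++ u) = rc L t := by rw [← rc_append_congr hst, hsu, hst]
  have ht : t ∈ Pref L := mem_pref_of_rc_eq hst hs
  have pumped_mem {x : List A} (hx : x ∈ Pref L) (hxu : rc L (x ++ u) = rc L x) (k : ℕ) :
      x ++ wpow u k ∈ Pref L := mem_pref_of_rc_eq (rc_append_wpow hxu k).symm hx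
  have pumped_ne {x : List A} (hxu : rc L (x ++ u) = rc L x) (hxg : rc L x ≠ rc L g) (k : ℕ) :
      rc L (x ++ wpow u k) ≠ rc L (g ++ wpow u k) := by
    rwa [rc_append_wpow hxu, rc_append_wpow hgu]
  obtain hside | hside := forall_colexLE_append_or_forall_append_colexLE hlen
  · refine hW.not_ascending_interlaced (pumped_mem hs hsu) (pumped_mem hg hgu)
      (pumped_ne hsu (Ne.symm hne)) fun k => ?_
    rw [wpow, ← List.append_assoc]
    simp only [append_colexLE_append_right_iff]
    exact ⟨hsg, hside s⟩
  · refine hW.not_descending_interlaced (pumped_mem ht htu) (pumped_mem hg hgu)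
      (pumped_ne htu (hst ▸ Ne.symm hne)) fun k => ?_
    rw [wpow, ← List.append_assoc]
    simp only [append_colexLE_append_right_iff]
    exact ⟨hside t, hgt⟩

theorem IsWheelerLang.rc_eq_of_loop (hW : IsWheelerLang L) {s g t v : List A}
    (hs : s ∈ Pref L) (hg : g ∈ Pref L) (hst : rc L s = rc L t)
    (hsg : ColexLE s g) (hgt : ColexLE g t)
    (hsv : rc L (s ++ v) = rc L s) (hgv : rc L (g ++ v) = rc L g) (hv : v ≠ []) :
    rc L g = rc L s := by
  refine hW.rc_eq_of_long_loop (u := wpow v (g.length + 1)) hs hg hst hsg hgt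
    (rc_append_wpow hsv _) (rc_append_wpow hgv _) ?_
  rw [length_wpow]
  exact Nat.le_mul_of_pos_right _ (List.length_pos_of_ne_nil hv)

end Wheeler

theorem exists_append_append_map_eq {A β : Type*} (f : List A → β) {S : Set β} (hS : S.Finite)
    {w : List A} (hw : S.ncard ≤ w.length) (hf : ∀ x, x <+: w → f x ∈ S) :
    ∃ x v y, w = x ++ v ++ y ∧ v ≠ [] ∧ (x ++ v).length ≤ S.ncard ∧ f (x ++ v) = f x := by
  obtain ⟨i, hi, j, hj, hij, hfij⟩ : ∃ i ∈ Set.Iic S.ncard, ∃ j ∈ Set.Iic S.ncard,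
      i ≠ j ∧ f (w.take i) = f (w.take j) :=
    Set.exists_ne_map_eq_of_ncard_lt_of_maps_to (by simp [Set.ncard_eq_toFinset_card'])
      (fun i _ => hf _ (w.take_prefix i)) hS
  wlog hlt : i < j generalizing i j
  · exact this j hj i hi hij.symm hfij.symm (by omega)
  have hxv : w.take i ++ (w.take j).drop i = w.take j := by
    rw [← min_eq_left hlt.le, ← List.take_take, min_eq_left hlt.le, List.take_append_drop]
  rw [Set.mem_Iic] at hj
  refine ⟨w.take i, (w.take j).drop i, w.drop j, ?_, ?_, ?_, ?_⟩
  · rw [hxv, List.take_append_drop]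
  · rw [← List.length_pos_iff, List.length_drop, List.length_take]
    omega
  · rw [hxv]
    exact (List.length_take_le ..).trans hj
  · rw [hxv, hfij]

section EquivC

variable {A : Type} [LinearOrder A] {L : Set (List A)} {s g t w α β γ : List A}

theorem EquivC.refl (L : Set (List A)) (α : List A) : EquivC L α α := by
  refine ⟨rfl, rfl, fun γ _ h => ?_⟩
  rw [or_self] at h
  rw [h.1.antisymm h.2]

theorem EquivC.trans (hαβ : EquivC L α β) (hβγ : EquivC L β γ) : EquivC L α γ := by
  obtain ⟨hrc, hlast, hconv⟩ := hαβ
  obtain ⟨hrc', hlast', hconv'⟩ := hβγ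
  rw [← hrc] at hconv'
  refine ⟨hrc.trans hrc', hlast.trans hlast', fun δ hδ h => ?_⟩
  rcases colexLE_total δ β with hδβ | hβδ <;> rcases h with ⟨hl, hr⟩ | ⟨hl, hr⟩
  · exact hconv δ hδ (Or.inl ⟨hl, hδβ⟩)
  · exact hconv' δ hδ (Or.inr ⟨hl, hδβ⟩)
  · exact hconv' δ hδ (Or.inl ⟨hβδ, hr⟩)
  · exact hconv δ hδ (Or.inr ⟨hβδ, hr⟩)

theorem IsWheelerLang.rc_append_eq_of_between (hW : IsWheelerLang L) (hst : rc L s = rc L t)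
    (hw : (rightContexts L).ncard ^ 2 ≤ w.length) (hs : s ++ w ∈ Pref L) (hg : g ++ w ∈ Pref L)
    (hsg : ColexLE s g) (hgt : ColexLE g t) : rc L (g ++ w) = rc L (s ++ w) := by
  have hfin := hW.finite_rightContexts
  rw [sq, ← Set.ncard_prod] at hw
  obtain ⟨x, v, y, rfl, hv, -, hloop⟩ := exists_append_append_map_eq
    (fun x => (rc L (s ++ x), rc L (g ++ x))) (hfin.prod hfin) hw fun x hx =>
      ⟨Set.mem_image_of_mem _ (mem_pref_of_isPrefix (List.prefix_append_right_inj s |>.2 hx) hs),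
        Set.mem_image_of_mem _ (mem_pref_of_isPrefix (List.prefix_append_right_inj g |>.2 hx) hg)⟩
  simp only [Prod.mk.injEq, ← List.append_assoc] at hloop hs hg ⊢
  have hgx : rc L (g ++ x) = rc L (s ++ x) := hW.rc_eq_of_loop
    (mem_pref_of_isPrefix (by simp) hs) (mem_pref_of_isPrefix (by simp) hg)
    (rc_append_congr hst x) (append_colexLE_append_right_iff.2 hsg)
    (append_colexLE_append_right_iff.2 hgt) hloop.1 hloop.2 hv
  exact rc_append_congr (rc_append_congr hgx v) y

theorem IsWheelerLang.rc_eq_of_between_append (hW : IsWheelerLang L) (hst : rc L s = rc L t)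
    (hw : (rightContexts L).ncard ^ 2 ≤ w.length) (hs : s ++ w ∈ Pref L) (hγ : γ ∈ Pref L)
    (hsγ : ColexLE (s ++ w) γ) (hγt : ColexLE γ (t ++ w)) : rc L γ = rc L (s ++ w) := by
  obtain ⟨g, rfl⟩ := isSuffix_of_colexLE_of_colexLE hsγ hγt
  exact hW.rc_append_eq_of_between hst hw hs hγ (append_colexLE_append_right_iff.1 hsγ)
    (append_colexLE_append_right_iff.1 hγt)

theorem IsWheelerLang.equivC_append (hW : IsWheelerLang L) (hst : rc L s = rc L t)
    (hw : (rightContexts L).ncard ^ 2 ≤ w.length) (hs : s ++ w ∈ Pref L) :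
    EquivC L (s ++ w) (t ++ w) := by
  have hpos : 0 < (rightContexts L).ncard :=
    (Set.ncard_pos hW.finite_rightContexts).2 ⟨_, Set.mem_image_of_mem _ hs⟩
  have hne : w ≠ [] := List.ne_nil_of_length_pos ((pow_pos hpos 2).trans_le hw)
  have hrc := rc_append_congr hst w
  refine ⟨hrc, ?_, fun γ hγ h => ?_⟩
  · rw [List.getLast?_append_of_ne_nil s hne, List.getLast?_append_of_ne_nil t hne]
  obtain ⟨hl, hr⟩ | ⟨hl, hr⟩ := h
  · exact hW.rc_eq_of_between_append hst hw hs hγ hl hr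
  · rw [hrc]
    exact hW.rc_eq_of_between_append hst.symm hw (mem_pref_of_rc_eq hrc hs) hγ hl hr

theorem IsWheelerLang.exists_equivC_length_lt (hW : IsWheelerLang L) (hα : α ∈ Pref L)
    (hlen : (rightContexts L).ncard + (rightContexts L).ncard ^ 2 ≤ α.length) :
    ∃ β ∈ Pref L, EquivC L β α ∧ β.length < α.length := by
  have hfin := hW.finite_rightContexts
  obtain ⟨s, v, w, rfl, hv, hsv, hloop⟩ := exists_append_append_map_eq (rc L) hfin
    (le_of_add_le_left hlen) fun x hx => Set.mem_image_of_mem _ (mem_pref_of_isPrefix hx hα)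
  have hw : (rightContexts L).ncard ^ 2 ≤ w.length := by
    rw [List.length_append] at hlen
    omega
  have hsw : s ++ w ∈ Pref L := mem_pref_of_rc_eq (rc_append_congr hloop w) hα
  refine ⟨s ++ w, hsw, hW.equivC_append hloop.symm hw hsw, ?_⟩
  simpa using List.length_pos_of_ne_nil hv

end EquivC

theorem statement3_general {A : Type} [LinearOrder A] {L : Set (List A)} (hW : IsWheelerLang L)
    {α : List A} (hα : α ∈ Pref L) :
    ∃ β ∈ Pref L, EquivC L β α ∧
      β.length < (rightContexts L).ncard + (rightContexts L).ncard ^ 2 := by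
  obtain ⟨β, ⟨hβ, hβα⟩, hshortest⟩ := exists_minimalFor_of_wellFoundedLT
    (fun β => β ∈ Pref L ∧ EquivC L β α) List.length ⟨α, hα, EquivC.refl L α⟩
  refine ⟨β, hβ, hβα, ?_⟩
  by_contra! hlen
  obtain ⟨γ, hγ, hγβ, hlt⟩ := hW.exists_equivC_length_lt hβ hlen
  exact hlt.not_ge (hshortest ⟨hγ, hγβ.trans hβα⟩ hlt.le)

/-- Lemma 2 of the paper: every `≡^c_L`-class of prefixes of
a Wheeler language contains a word of length `< n + n²`, where `n` is the
number of states of the minimum DFA for `L`. -/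
theorem statement3 {A : Type} [Fintype A] [LinearOrder A]
    (L : Set (List A)) {n : ℕ} (M : PDFA A (Fin n))
    (hacc : M.accepts = L)
    (hmin : ∀ (m : ℕ) (M' : PDFA A (Fin m)), M'.accepts = L → n ≤ m)
    (hW : IsWheelerLang L) :
    ∀ α ∈ Pref L, ∃ β ∈ Pref L, EquivC L β α ∧ β.length < n + n ^ 2 := by
  intro α hα
  obtain ⟨β, hβ, hβα, hlen⟩ := statement3_general hW hα
  have hn : (rightContexts L).ncard ≤ n := by
    simpa only [hacc, Nat.card_fin] using M.ncard_rightContexts_accepts_le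
  exact ⟨β, hβ, hβα, hlen.trans_le (by gcongr)⟩

end Statement3

end WheelerPaper
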